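/- arXiv:1202.3225 — 2 statements merged into one kernel-verified Lean document; each statement's English description precedes it below -/
import Mathlib

section
/- If u, v ∈ 𝒜₂ and w ∈ 𝒜₀, then there is a constant c_* ≥ 1, depending only on the C²-norms ‖u‖₂, ‖v‖₂, ‖w‖₂ (and independent of α₀, H₁, H₂), such that ‖∂^α(uvw)‖₀ ≤ c_* H₁^{α₁} H₂^{α₂} [(|α|−1)!]^s for every α = (α₁,α₂) ≤ α₀ with |α| ≥ 1 (i.e. c_*^{−1} uvw ∈ 𝒜₀). -/
open Set

noncomputable section

/-- The closed strip `R̄ = ℝ × [p₀, 0]`. -/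
def Strip (p₀ : ℝ) : Set (ℝ × ℝ) := {z : ℝ × ℝ | p₀ ≤ z.2 ∧ z.2 ≤ 0}

/-- The mixed partial derivative `∂_q^a ∂_p^b f` of `f : ℝ² → ℝ` within the set `S`,
realized as the iterated Fréchet derivative within `S` applied to the corresponding
coordinate directions. -/
def mpw (S : Set (ℝ × ℝ)) (a b : ℕ) (f : ℝ × ℝ → ℝ) (z : ℝ × ℝ) : ℝ :=
  iteratedFDerivWithin ℝ (a + b) f S z
    (fun i => if (i : ℕ) < a then ((1 : ℝ), (0 : ℝ)) else ((0 : ℝ), (1 : ℝ)))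

/-- `∂_q^a ∂_p^b f` within the strip `R̄`. -/
def pd (p₀ : ℝ) (a b : ℕ) (f : ℝ × ℝ → ℝ) : ℝ × ℝ → ℝ := mpw (Strip p₀) a b f

/-- Euclidean distance on `ℝ²`. -/
def edist2 (z z' : ℝ × ℝ) : ℝ := Real.sqrt ((z.1 - z'.1) ^ 2 + (z.2 - z'.2) ^ 2)

/-- `sup_{R̄} |f|`. -/
def supS (p₀ : ℝ) (f : ℝ × ℝ → ℝ) : ℝ := sSup ((fun z => |f z|) '' Strip p₀)

/-- The Hölder seminorm of exponent `μ` of `f` over the strip `R̄`. -/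
def hsemi (p₀ μ : ℝ) (f : ℝ × ℝ → ℝ) : ℝ :=
  sSup {y | ∃ z ∈ Strip p₀, ∃ z' ∈ Strip p₀, z ≠ z' ∧ y = |f z - f z'| / (edist2 z z') ^ μ}

/-- The `C^k` sup-norm `‖f‖_k = Σ_{|α| ≤ k} sup_{R̄} |∂^α f|`. -/
def cknorm (p₀ : ℝ) (k : ℕ) (f : ℝ × ℝ → ℝ) : ℝ :=
  ∑ a ∈ Finset.range (k + 1), ∑ b ∈ Finset.range (k + 1 - a), supS p₀ (pd p₀ a b f)

/-- The Hölder norm `‖f‖_{k,μ} = ‖f‖_k + max_{|α| = k} [∂^α f]_μ`. -/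
def hnorm (p₀ μ : ℝ) (k : ℕ) (f : ℝ × ℝ → ℝ) : ℝ :=
  cknorm p₀ k f + sSup {y | ∃ a b : ℕ, a + b = k ∧ y = hsemi p₀ μ (pd p₀ a b f)}

/-- Boundedness of `f` on the strip (finiteness of `sup_{R̄} |f|`). -/
def bddS (p₀ : ℝ) (f : ℝ × ℝ → ℝ) : Prop := BddAbove ((fun z => |f z|) '' Strip p₀)

/-- Finiteness of the Hölder seminorm of `f` on the strip. -/
def bddH (p₀ μ : ℝ) (f : ℝ × ℝ → ℝ) : Prop :=
  BddAbove {y | ∃ z ∈ Strip p₀, ∃ z' ∈ Strip p₀, z ≠ z' ∧ y = |f z - f z'| / (edist2 z z') ^ μ}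

/-- Finiteness of the `C^{k,μ}(R̄)` norm. -/
def finCk (p₀ μ : ℝ) (k : ℕ) (f : ℝ × ℝ → ℝ) : Prop :=
  (∀ a b : ℕ, a + b ≤ k → bddS p₀ (pd p₀ a b f)) ∧
  (∀ a b : ℕ, a + b = k → bddH p₀ μ (pd p₀ a b f))

/-- Membership in `C^{k,μ}(R̄)`: `k` times continuously differentiable on the strip with
bounded derivatives, the top-order ones Hölder continuous of exponent `μ`. -/
def MemCk (p₀ μ : ℝ) (k : ℕ) (f : ℝ × ℝ → ℝ) : Prop :=
  ContDiffOn ℝ k f (Strip p₀) ∧ finCk p₀ μ k f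

/-- The class `𝒜_j`: functions `f ∈ C^{|α₀|,μ}(R̄)` such that
`‖∂^α f‖₀ ≤ H₁^{α₁−j} H₂^{α₂} [(|α|−j−1)!]^s` for every `α ≤ α₀` with `|α| ≥ j+1`. -/
def memA (p₀ μ s H₁ H₂ : ℝ) (α₀ : ℕ × ℕ) (j : ℕ) (f : ℝ × ℝ → ℝ) : Prop :=
  MemCk p₀ μ (α₀.1 + α₀.2) f ∧
  ∀ a b : ℕ, a ≤ α₀.1 → b ≤ α₀.2 → j + 1 ≤ a + b →
    ∀ z ∈ Strip p₀, |pd p₀ a b f z| ≤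
      H₁ ^ ((a : ℤ) - (j : ℤ)) * H₂ ^ b * (Nat.factorial (a + b - (j + 1)) : ℝ) ^ s

def e12 (a : ℕ) (i : ℕ) : ℝ × ℝ := if i < a then ((1 : ℝ), (0 : ℝ)) else ((0 : ℝ), (1 : ℝ))

lemma strip_ud (p₀ : ℝ) (hp₀ : p₀ < 0) : UniqueDiffOn ℝ (Strip p₀) := by
  have : Strip p₀ = (univ : Set ℝ) ×ˢ Icc p₀ 0 := by
    ext z; simp [Strip]
  rw [this]
  exact uniqueDiffOn_univ.prod (uniqueDiffOn_Icc hp₀)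

lemma itd_cast (f : ℝ × ℝ → ℝ) (S : Set (ℝ × ℝ)) (z : ℝ × ℝ) (P : ℕ → ℝ × ℝ) (n m : ℕ)
    (h : n = m) : iteratedFDerivWithin ℝ n f S z (fun i => P i) =
      iteratedFDerivWithin ℝ m f S z (fun i => P i) := by
  subst h; rfl

lemma pd_deriv (p₀ : ℝ) (hp₀ : p₀ < 0) (f : ℝ × ℝ → ℝ) (N a b : ℕ)
    (hf : ContDiffOn ℝ N f (Strip p₀)) (hab : a + b < N) (z : ℝ × ℝ) (hz : z ∈ Strip p₀) :
    ∃ L : ℝ × ℝ →L[ℝ] ℝ, HasFDerivWithinAt (pd p₀ a b f) L (Strip p₀) z ∧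
      L (1, 0) = pd p₀ (a + 1) b f z ∧ (a = 0 → L (0, 1) = pd p₀ 0 (b + 1) f z) := by
  have hd := (hf.differentiableOn_iteratedFDerivWithin (m := a + b) (by exact_mod_cast hab)
    (strip_ud p₀ hp₀)) z hz
  have hd' := hd.hasFDerivWithinAt
  have key := (ContinuousMultilinearMap.apply ℝ (fun _ : Fin (a + b) => ℝ × ℝ) ℝ
    (fun i : Fin (a + b) => e12 a i)).hasFDerivAt.comp_hasFDerivWithinAt z hd'
  refine ⟨_, key, ?_, ?_⟩
  · have h1 := itd_cast f (Strip p₀) z (e12 (a + 1)) (a + 1 + b) (a + b + 1) (by omega)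
    have h2 : pd p₀ (a + 1) b f z = iteratedFDerivWithin ℝ (a + 1 + b) f (Strip p₀) z
      (fun i => e12 (a + 1) i) := rfl
    rw [h2, h1, iteratedFDerivWithin_succ_apply_left]
    have h3 : e12 (a + 1) ((0 : Fin (a + b + 1)) : ℕ) = (1, 0) := by simp [e12]
    have h4 : Fin.tail (fun i : Fin (a + b + 1) => e12 (a + 1) i) = fun i : Fin (a + b) => e12 a i := by
      funext i; simp [Fin.tail, e12]
    rw [h3, h4]
    rfl
  · rintro rfl
    have h1 := itd_cast f (Strip p₀) z (e12 0) (0 + (b + 1)) (0 + b + 1) (by omega)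
    have h2 : pd p₀ 0 (b + 1) f z = iteratedFDerivWithin ℝ (0 + (b + 1)) f (Strip p₀) z
      (fun i => e12 0 i) := rfl
    rw [h2, h1, iteratedFDerivWithin_succ_apply_left]
    have h3 : e12 0 ((0 : Fin (0 + b + 1)) : ℕ) = (0, 1) := by simp [e12]
    have h4 : Fin.tail (fun i : Fin (0 + b + 1) => e12 0 i) = fun i : Fin (0 + b) => e12 0 i := by
      funext i; simp [Fin.tail, e12]
    rw [h3, h4]
    rfl

lemma leib0 (p₀ : ℝ) (hp₀ : p₀ < 0) (f g : ℝ × ℝ → ℝ) (N : ℕ)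
    (hf : ContDiffOn ℝ N f (Strip p₀)) (hg : ContDiffOn ℝ N g (Strip p₀)) (b : ℕ) :
    b ≤ N → ∀ z ∈ Strip p₀, pd p₀ 0 b (fun y => f y * g y) z =
      ∑ j ∈ Finset.range (b + 1), (b.choose j : ℝ) * (pd p₀ 0 j f z * pd p₀ 0 (b - j) g z) := by
  induction b with
  | zero => intro _ z hz; simp [pd, mpw]
  | succ b ih =>
    intro hb z hz
    have ih' := ih (by omega)
    obtain ⟨L, hL, -, hL2⟩ := pd_deriv p₀ hp₀ (fun y => f y * g y) N 0 b (hf.mul hg) (by omega) z hz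
    have F : ∀ j, ∃ L : ℝ × ℝ →L[ℝ] ℝ, j ≤ b → HasFDerivWithinAt (pd p₀ 0 j f) L (Strip p₀) z ∧
        L (0, 1) = pd p₀ 0 (j + 1) f z := by
      intro j
      by_cases hj : j ≤ b
      · obtain ⟨L, h1, -, h2⟩ := pd_deriv p₀ hp₀ f N 0 j hf (by omega) z hz
        exact ⟨L, fun _ => ⟨h1, h2 rfl⟩⟩
      · exact ⟨0, fun h => absurd h hj⟩
    have G : ∀ j, ∃ L : ℝ × ℝ →L[ℝ] ℝ, j ≤ b → HasFDerivWithinAt (pd p₀ 0 j g) L (Strip p₀) z ∧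
        L (0, 1) = pd p₀ 0 (j + 1) g z := by
      intro j
      by_cases hj : j ≤ b
      · obtain ⟨L, h1, -, h2⟩ := pd_deriv p₀ hp₀ g N 0 j hg (by omega) z hz
        exact ⟨L, fun _ => ⟨h1, h2 rfl⟩⟩
      · exact ⟨0, fun h => absurd h hj⟩
    choose LF hF using F
    choose LG hG using G
    have hs := HasFDerivWithinAt.fun_sum (u := Finset.range (b + 1)) (fun j hj =>
      (((hF j (by simp at hj; omega)).1.mul (hG (b - j) (by omega)).1).const_mul
        (b.choose j : ℝ)))
    have hs' := hs.congr (f₁ := pd p₀ 0 b (fun y => f y * g y)) (fun y hy => ih' y hy) (ih' z hz)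
    have e := (strip_ud p₀ hp₀ z hz).eq hL hs'
    rw [← hL2 rfl, e, Finset.sum_choose_succ_mul (fun i j => pd p₀ 0 i f z * pd p₀ 0 j g z),
      ← Finset.sum_add_distrib]
    simp only [ContinuousLinearMap.sum_apply]
    refine Finset.sum_congr rfl fun j hj => ?_
    have hj' : j ≤ b := by simp at hj; omega
    simp [(hF j hj').2, (hG (b - j) (by omega)).2, show b + 1 - j = b - j + 1 by omega]
    left
    ring

lemma leib (p₀ : ℝ) (hp₀ : p₀ < 0) (f g : ℝ × ℝ → ℝ) (N : ℕ)
    (hf : ContDiffOn ℝ N f (Strip p₀)) (hg : ContDiffOn ℝ N g (Strip p₀)) (b a : ℕ) :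
    a + b ≤ N → ∀ z ∈ Strip p₀, pd p₀ a b (fun y => f y * g y) z =
      ∑ i ∈ Finset.range (a + 1), (a.choose i : ℝ) *
      ∑ j ∈ Finset.range (b + 1), (b.choose j : ℝ) *
        (pd p₀ i j f z * pd p₀ (a - i) (b - j) g z) := by
  induction a with
  | zero =>
    intro h z hz
    simpa using leib0 p₀ hp₀ f g N hf hg b (by omega) z hz
  | succ a ih =>
    intro hb z hz
    have ih' := ih (by omega)
    obtain ⟨L, hL, hL2, -⟩ := pd_deriv p₀ hp₀ (fun y => f y * g y) N a b (hf.mul hg) (by omega) z hz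
    have F : ∀ i j, ∃ L : ℝ × ℝ →L[ℝ] ℝ, i ≤ a → j ≤ b →
        HasFDerivWithinAt (pd p₀ i j f) L (Strip p₀) z ∧
        L (1, 0) = pd p₀ (i + 1) j f z := by
      intro i j
      by_cases hj : i ≤ a ∧ j ≤ b
      · obtain ⟨L, h1, h2, -⟩ := pd_deriv p₀ hp₀ f N i j hf (by omega) z hz
        exact ⟨L, fun _ _ => ⟨h1, h2⟩⟩
      · exact ⟨0, fun h h' => absurd ⟨h, h'⟩ hj⟩
    have G : ∀ i j, ∃ L : ℝ × ℝ →L[ℝ] ℝ, i ≤ a → j ≤ b →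
        HasFDerivWithinAt (pd p₀ i j g) L (Strip p₀) z ∧
        L (1, 0) = pd p₀ (i + 1) j g z := by
      intro i j
      by_cases hj : i ≤ a ∧ j ≤ b
      · obtain ⟨L, h1, h2, -⟩ := pd_deriv p₀ hp₀ g N i j hg (by omega) z hz
        exact ⟨L, fun _ _ => ⟨h1, h2⟩⟩
      · exact ⟨0, fun h h' => absurd ⟨h, h'⟩ hj⟩
    choose LF hF using F
    choose LG hG using G
    have hs := HasFDerivWithinAt.fun_sum (u := Finset.range (a + 1)) (fun i hi =>
      (HasFDerivWithinAt.fun_sum (u := Finset.range (b + 1)) (fun j hj =>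
      (((hF i j (by simp at hi; omega) (by simp at hj; omega)).1.mul
        (hG (a - i) (b - j) (by omega) (by omega)).1).const_mul
        (b.choose j : ℝ)))).const_mul (a.choose i : ℝ))
    have hs' := hs.congr (f₁ := pd p₀ a b (fun y => f y * g y)) (fun y hy => ih' y hy) (ih' z hz)
    have e := (strip_ud p₀ hp₀ z hz).eq hL hs'
    rw [← hL2, e, Finset.sum_choose_succ_mul (fun i k => ∑ j ∈ Finset.range (b + 1),
        (b.choose j : ℝ) * (pd p₀ i j f z * pd p₀ k (b - j) g z)),
      ← Finset.sum_add_distrib]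
    simp only [ContinuousLinearMap.sum_apply]
    refine Finset.sum_congr rfl fun i hi => ?_
    have hi' : i ≤ a := by simp at hi; omega
    rw [← mul_add, ← Finset.sum_add_distrib, ContinuousLinearMap.smul_apply, smul_eq_mul]
    congr 1
    simp only [ContinuousLinearMap.sum_apply]
    refine Finset.sum_congr rfl fun j hj => ?_
    have hj' : j ≤ b := by simp at hj; omega
    simp [(hF i j hi' hj').2, (hG (a - i) (b - j) (by omega) (by omega)).2,
      show a + 1 - i = a - i + 1 by omega]
    left
    ring

lemma vander (b a : ℕ) : ∀ F : ℕ → ℕ → ℝ,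
    ∑ i ∈ Finset.range (a + 1), (a.choose i : ℝ) *
      ∑ j ∈ Finset.range (b + 1), (b.choose j : ℝ) * F (i + j) (a - i + (b - j)) =
    ∑ k ∈ Finset.range (a + b + 1), ((a + b).choose k : ℝ) * F k (a + b - k) := by
  induction a with
  | zero => intro F; simp
  | succ a ih =>
    intro F
    rw [Finset.sum_choose_succ_mul (fun i k => ∑ j ∈ Finset.range (b + 1),
        (b.choose j : ℝ) * F (i + j) (k + (b - j)))]
    have h1 := ih (fun x y => F x (y + 1))
    have h2 := ih (fun x y => F (x + 1) y)
    rw [show a + 1 + b = a + b + 1 by omega, Finset.sum_choose_succ_mul F (a + b)]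
    have e1 : ∀ k ∈ Finset.range (a + b + 1), ((a + b).choose k : ℝ) * F k (a + b + 1 - k) =
        ((a + b).choose k : ℝ) * F k (a + b - k + 1) := by
      intro k hk
      rw [show a + b + 1 - k = a + b - k + 1 by simp at hk; omega]
    rw [Finset.sum_congr rfl e1, ← h1, ← h2]
    congr 1
    · refine Finset.sum_congr rfl fun i hi => ?_
      congr 1
      refine Finset.sum_congr rfl fun j hj => ?_
      rw [show a + 1 - i + (b - j) = a - i + (b - j) + 1 by simp at hi; omega]
    · refine Finset.sum_congr rfl fun i hi => ?_
      congr 1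
      refine Finset.sum_congr rfl fun j hj => ?_
      rw [show i + 1 + j = i + j + 1 by omega]

lemma sq_sum (n : ℕ) : ∑ k ∈ Finset.range (n + 1), (1 : ℝ) / ((k : ℝ) + 1) ^ 2 ≤
    2 - 1 / ((n : ℝ) + 1) := by
  induction n with
  | zero => norm_num
  | succ n ih =>
    rw [Finset.sum_range_succ]
    have : (1 : ℝ) / (((n + 1 : ℕ) : ℝ) + 1) ^ 2 ≤ 1 / ((n : ℝ) + 1) - 1 / (((n + 1 : ℕ) : ℝ) + 1) := by
      push_cast
      rw [div_sub_div _ _ (by positivity) (by positivity), div_le_div_iff₀ (by positivity) (by positivity)]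
      have : (0 : ℝ) ≤ n := by positivity
      nlinarith [mul_nonneg this this, mul_nonneg this (mul_nonneg this this)]
    linarith

lemma term_le (n k : ℕ) (hk : k ≤ n) :
    (n.choose k : ℝ) * (((k - 2).factorial : ℝ) * ((n - k - 1).factorial : ℝ)) ≤
      (8 / ((k : ℝ) + 1) ^ 2 + 8 / ((n : ℝ) + 1)) * ((n - 1).factorial : ℝ) := by
  have hpos : (0 : ℝ) < ((n - 1).factorial : ℝ) := by positivity
  have hn8 : (0 : ℝ) ≤ 8 / ((n : ℝ) + 1) := by positivity
  rcases Nat.lt_or_ge k 2 with h | h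
  · interval_cases k
    · simp
      nlinarith
    · have : (n : ℝ) * ((n - 1 - 1).factorial : ℝ) ≤ 2 * ((n - 1).factorial : ℝ) := by
        rcases n with _ | _ | m
        · omega
        · norm_num
        · simp only [Nat.add_sub_cancel, Nat.factorial_succ]
          push_cast
          have : (0 : ℝ) < (m.factorial : ℝ) := by positivity
          have hm : (0 : ℝ) ≤ m := by positivity
          nlinarith [mul_nonneg hm this.le]
      norm_num
      nlinarith
  · rcases Nat.lt_or_ge k n with h' | h'
    · obtain ⟨x, rfl⟩ : ∃ x, k = x + 2 := ⟨k - 2, by omega⟩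
      obtain ⟨y, rfl⟩ : ∃ y, n = x + 2 + (y + 1) := ⟨n - (x + 2) - 1, by omega⟩
      have hc := Nat.choose_mul_factorial_mul_factorial h'.le
      rw [show x + 2 + (y + 1) - (x + 2) = y + 1 by omega] at hc
      have e1 : x + 2 + (y + 1) - (x + 2) - 1 = y := by omega
      have e2 : x + 2 + (y + 1) - 1 = x + 2 + y := by omega
      have e3 : x + 2 - 2 = x := by omega
      rw [e1, e2, e3]
      generalize (x + 2 + (y + 1)).choose (x + 2) = C at hc ⊢
      rw [show x + 2 + (y + 1) = (x + 2 + y) + 1 by omega, Nat.factorial_succ (x + 2 + y),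
        Nat.factorial_succ y, Nat.factorial_succ (x + 1), Nat.factorial_succ x] at hc
      have hc' : (C : ℝ) * ((x + 2) * ((x + 1) * x.factorial)) * ((y + 1) * y.factorial) =
          (x + 2 + y + 1) * (x + 2 + y).factorial := by
        have := congrArg (Nat.cast : ℕ → ℝ) hc
        push_cast at this
        rw [← this]; ring
      have hx : (0 : ℝ) ≤ x := by positivity
      have hy : (0 : ℝ) ≤ y := by positivity
      have e : (C : ℝ) * (x.factorial * y.factorial) =
          ((x + 2 + y + 1) / ((x + 2) * (x + 1) * (y + 1))) * (x + 2 + y).factorial := by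
        rw [div_mul_eq_mul_div, ← hc']
        field_simp
      rw [e]
      refine mul_le_mul_of_nonneg_right ?_ (by positivity)
      have s : ((x : ℝ) + 2 + y + 1) / ((x + 2) * (x + 1) * (y + 1)) =
          1 / ((x + 2) * (x + 1)) + 1 / ((x + 1) * (y + 1)) := by
        field_simp; ring
      rw [s]
      push_cast
      refine add_le_add ?_ ?_
      · rw [div_le_div_iff₀ (by positivity) (by positivity)]
        nlinarith [mul_nonneg hx hx]
      · rw [div_le_div_iff₀ (by positivity) (by positivity)]
        nlinarith [mul_nonneg hx hy]
    · obtain rfl : k = n := by omega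
      have h0 : (0 : ℝ) ≤ 8 / ((k : ℝ) + 1) ^ 2 := by positivity
      obtain ⟨x, rfl⟩ : ∃ x, k = x + 2 := ⟨k - 2, by omega⟩
      have : ((x.factorial : ℝ)) ≤ 8 / (((x + 2 : ℕ) : ℝ) + 1) * (((x + 1).factorial : ℕ) : ℝ) := by
        rw [Nat.factorial_succ, div_mul_eq_mul_div, le_div_iff₀ (by positivity)]
        push_cast
        have h1 : (0 : ℝ) < (x.factorial : ℝ) := by positivity
        have hm : (0 : ℝ) ≤ x := by positivity
        nlinarith [mul_nonneg hm h1.le]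
      simp only [Nat.choose_self, Nat.sub_self, Nat.zero_sub, Nat.factorial_zero,
        Nat.add_sub_cancel, show x + 2 - 1 = x + 1 by omega] at *
      push_cast at *
      nlinarith

lemma fact_le (n k : ℕ) (hk : k ≤ n) :
    (k - 2).factorial * (n - k - 1).factorial ≤ (n - 1).factorial := by
  calc _ ≤ ((k - 2) + (n - k - 1)).factorial :=
        Nat.le_of_dvd (Nat.factorial_pos _) (Nat.factorial_mul_factorial_dvd_factorial_add _ _)
    _ ≤ _ := Nat.factorial_le (by omega)

lemma term_le_s (s : ℝ) (hs : 1 ≤ s) (n k : ℕ) (hk : k ≤ n) :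
    (n.choose k : ℝ) * (((k - 2).factorial : ℝ) ^ s * ((n - k - 1).factorial : ℝ) ^ s) ≤
      (8 / ((k : ℝ) + 1) ^ 2 + 8 / ((n : ℝ) + 1)) * ((n - 1).factorial : ℝ) ^ s := by
  have hpos : (0 : ℝ) < ((n - 1).factorial : ℝ) := by positivity
  have h1 := term_le n k hk
  have h2 : ((k - 2).factorial : ℝ) * ((n - k - 1).factorial : ℝ) ≤ ((n - 1).factorial : ℝ) := by
    exact_mod_cast fact_le n k hk
  rw [← Real.mul_rpow (by positivity) (by positivity)]
  set X := ((k - 2).factorial : ℝ) * ((n - k - 1).factorial : ℝ)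
  have hX : 0 ≤ X := by positivity
  set Y := ((n - 1).factorial : ℝ)
  have h3 : (X / Y) ^ s ≤ X / Y := by
    have := Real.rpow_le_rpow_of_exponent_ge' (x := X / Y) (by positivity)
      ((div_le_one hpos).2 h2) zero_le_one hs
    simpa using this
  have h4 : X ^ s = (X / Y) ^ s * Y ^ s := by
    rw [← Real.mul_rpow (by positivity) hpos.le, div_mul_cancel₀ _ hpos.ne']
  rw [h4, ← mul_assoc]
  refine mul_le_mul_of_nonneg_right ?_ (by positivity)
  calc (n.choose k : ℝ) * (X / Y) ^ s ≤ (n.choose k : ℝ) * (X / Y) := by gcongr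
    _ = (n.choose k : ℝ) * X / Y := by ring
    _ ≤ _ := (div_le_iff₀ hpos).2 h1

lemma sum_le_s (s : ℝ) (hs : 1 ≤ s) (n : ℕ) :
    ∑ k ∈ Finset.range (n + 1),
    (n.choose k : ℝ) * (((k - 2).factorial : ℝ) ^ s * ((n - k - 1).factorial : ℝ) ^ s) ≤
      24 * ((n - 1).factorial : ℝ) ^ s := by
  calc _ ≤ ∑ k ∈ Finset.range (n + 1),
        (8 / ((k : ℝ) + 1) ^ 2 + 8 / ((n : ℝ) + 1)) * ((n - 1).factorial : ℝ) ^ s :=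
        Finset.sum_le_sum fun k hk => term_le_s s hs n k (by simp at hk; omega)
    _ = (∑ k ∈ Finset.range (n + 1), 8 * (1 / ((k : ℝ) + 1) ^ 2) + 8) *
        ((n - 1).factorial : ℝ) ^ s := by
        rw [← Finset.sum_mul, Finset.sum_add_distrib]
        congr 2
        · exact Finset.sum_congr rfl fun _ _ => by ring
        · simp
          field_simp
    _ ≤ _ := by
        refine mul_le_mul_of_nonneg_right ?_ (by positivity)
        rw [← Finset.mul_sum]
        have := sq_sum n
        have h : (0 : ℝ) ≤ 1 / ((n : ℝ) + 1) := by positivity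
        linarith

lemma prod_bound (p₀ s H₁ H₂ M M' : ℝ) (hp₀ : p₀ < 0) (hs : 1 ≤ s) (hH₁ : 1 ≤ H₁) (hH₂ : 1 ≤ H₂)
    (hM : 0 ≤ M) (hM' : 0 ≤ M') (A B : ℕ) (f g : ℝ × ℝ → ℝ)
    (hf : ContDiffOn ℝ (A + B : ℕ) f (Strip p₀)) (hg : ContDiffOn ℝ (A + B : ℕ) g (Strip p₀))
    (bf : ∀ a b : ℕ, a ≤ A → b ≤ B → ∀ z ∈ Strip p₀, |pd p₀ a b f z| ≤
      M * (H₁ ^ a * H₂ ^ b * ((a + b - 2).factorial : ℝ) ^ s))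
    (bg : ∀ a b : ℕ, a ≤ A → b ≤ B → ∀ z ∈ Strip p₀, |pd p₀ a b g z| ≤
      M' * (H₁ ^ a * H₂ ^ b * ((a + b - 1).factorial : ℝ) ^ s)) :
    ∀ a b : ℕ, a ≤ A → b ≤ B → ∀ z ∈ Strip p₀, |pd p₀ a b (fun y => f y * g y) z| ≤
      (24 * M * M') * (H₁ ^ a * H₂ ^ b * ((a + b - 1).factorial : ℝ) ^ s) := by
  intro a b ha hb z hz
  rw [leib p₀ hp₀ f g (A + B) hf hg b a (by omega) z hz]
  have hv := vander b a (fun x y => ((x - 2).factorial : ℝ) ^ s * ((y - 1).factorial : ℝ) ^ s)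
  have hsum := sum_le_s s hs (a + b)
  rw [← hv] at hsum
  calc _ ≤ ∑ i ∈ Finset.range (a + 1), (a.choose i : ℝ) *
      ∑ j ∈ Finset.range (b + 1), (b.choose j : ℝ) *
        |pd p₀ i j f z * pd p₀ (a - i) (b - j) g z| := by
        refine (Finset.abs_sum_le_sum_abs _ _).trans (Finset.sum_le_sum fun i _ => ?_)
        rw [abs_mul, Nat.abs_cast]
        refine mul_le_mul_of_nonneg_left ?_ (by positivity)
        refine (Finset.abs_sum_le_sum_abs _ _).trans (Finset.sum_le_sum fun j _ => ?_)
        rw [abs_mul, Nat.abs_cast]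
    _ ≤ ∑ i ∈ Finset.range (a + 1), (a.choose i : ℝ) *
      ∑ j ∈ Finset.range (b + 1), (b.choose j : ℝ) *
        ((M * M' * (H₁ ^ a * H₂ ^ b)) * (((i + j - 2).factorial : ℝ) ^ s *
          ((a - i + (b - j) - 1).factorial : ℝ) ^ s)) := by
        refine Finset.sum_le_sum fun i hi => ?_
        refine mul_le_mul_of_nonneg_left ?_ (by positivity)
        refine Finset.sum_le_sum fun j hj => ?_
        refine mul_le_mul_of_nonneg_left ?_ (by positivity)
        have hi' : i ≤ a := by simp at hi; omega
        have hj' : j ≤ b := by simp at hj; omega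
        rw [abs_mul]
        refine (mul_le_mul (bf i j (by omega) (by omega) z hz)
          (bg (a - i) (b - j) (by omega) (by omega) z hz) (abs_nonneg _) (by positivity)).trans
          (le_of_eq ?_)
        have e1 : H₁ ^ a = H₁ ^ i * H₁ ^ (a - i) := by rw [← pow_add]; congr 1; omega
        have e2 : H₂ ^ b = H₂ ^ j * H₂ ^ (b - j) := by rw [← pow_add]; congr 1; omega
        rw [e1, e2]; ring
    _ = (M * M' * (H₁ ^ a * H₂ ^ b)) * ∑ i ∈ Finset.range (a + 1), (a.choose i : ℝ) *
      ∑ j ∈ Finset.range (b + 1), (b.choose j : ℝ) *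
        (((i + j - 2).factorial : ℝ) ^ s *
          ((a - i + (b - j) - 1).factorial : ℝ) ^ s) := by
        simp only [Finset.mul_sum]
        refine Finset.sum_congr rfl fun i hi => Finset.sum_congr rfl fun j hj => ?_
        ring
    _ ≤ (M * M' * (H₁ ^ a * H₂ ^ b)) * (24 * ((a + b - 1).factorial : ℝ) ^ s) :=
        mul_le_mul_of_nonneg_left hsum (by positivity)
    _ = _ := by ring

lemma low_bound (p₀ K : ℝ) (f : ℝ × ℝ → ℝ) (a b : ℕ) (hab : a + b ≤ 2)
    (hK : cknorm p₀ 2 f ≤ K) (hb : bddS p₀ (pd p₀ a b f)) (z : ℝ × ℝ) (hz : z ∈ Strip p₀) :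
    |pd p₀ a b f z| ≤ K := by
  have nn : ∀ g, 0 ≤ supS p₀ g := by
    intro g
    refine Real.sSup_nonneg ?_
    rintro _ ⟨y, _, rfl⟩
    exact abs_nonneg _
  have h1 : |pd p₀ a b f z| ≤ supS p₀ (pd p₀ a b f) := le_csSup hb ⟨z, hz, rfl⟩
  refine h1.trans (le_trans ?_ hK)
  unfold cknorm
  have h2 := Finset.single_le_sum (f := fun b => supS p₀ (pd p₀ a b f))
    (s := Finset.range (2 + 1 - a)) (fun i _ => nn _) (a := b) (by simp; omega)
  refine h2.trans ?_
  exact Finset.single_le_sum (f := fun a => ∑ b ∈ Finset.range (2 + 1 - a), supS p₀ (pd p₀ a b f))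
    (s := Finset.range (2 + 1)) (fun i _ => Finset.sum_nonneg fun _ _ => nn _) (a := a)
    (by simp; omega)

lemma memA_bound (p₀ μ s H₁ H₂ K : ℝ) (hs : 1 ≤ s) (hH₁ : 1 ≤ H₁) (hH₂ : 1 ≤ H₂) (α₀ : ℕ × ℕ)
    (h3 : 3 ≤ α₀.1 + α₀.2) (j r : ℕ) (hj : j ≤ 2) (hr : r ≤ j + 1) (f : ℝ × ℝ → ℝ)
    (hK : cknorm p₀ 2 f ≤ K) (hf : memA p₀ μ s H₁ H₂ α₀ j f) :
    ∀ a b : ℕ, a ≤ α₀.1 → b ≤ α₀.2 → ∀ z ∈ Strip p₀, |pd p₀ a b f z| ≤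
      max K 1 * (H₁ ^ a * H₂ ^ b * ((a + b - r).factorial : ℝ) ^ s) := by
  intro a b ha hb z hz
  have f1 : (1 : ℝ) ≤ ((a + b - r).factorial : ℝ) ^ s :=
    Real.one_le_rpow (by exact_mod_cast Nat.factorial_pos _) (by linarith)
  have p1 : 1 ≤ H₁ ^ a := one_le_pow₀ hH₁
  have p2 : 1 ≤ H₂ ^ b := one_le_pow₀ hH₂
  rcases Nat.lt_or_ge (a + b) (j + 1) with h | h
  · have := low_bound p₀ K f a b (by omega) hK (hf.1.2.1 a b (by omega)) z hz
    have h1 : 1 ≤ H₁ ^ a * H₂ ^ b * ((a + b - r).factorial : ℝ) ^ s :=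
      one_le_mul_of_one_le_of_one_le (one_le_mul_of_one_le_of_one_le p1 p2) f1
    calc _ ≤ max K 1 := this.trans (le_max_left _ _)
      _ ≤ _ := le_mul_of_one_le_right (by positivity) h1
  · refine (hf.2 a b ha hb h z hz).trans ?_
    have q1 : H₁ ^ ((a : ℤ) - (j : ℤ)) ≤ H₁ ^ a := by
      rw [← zpow_natCast]
      exact zpow_le_zpow_right₀ hH₁ (by omega)
    have q2 : ((a + b - (j + 1)).factorial : ℝ) ^ s ≤ ((a + b - r).factorial : ℝ) ^ s := by
      refine Real.rpow_le_rpow (by positivity) ?_ (by linarith)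
      exact_mod_cast Nat.factorial_le (by omega)
    calc _ ≤ H₁ ^ a * H₂ ^ b * ((a + b - r).factorial : ℝ) ^ s := by gcongr
      _ ≤ _ := le_mul_of_one_le_left (by positivity) (le_max_right _ _)

/-- If `u, v ∈ 𝒜₂` and `w ∈ 𝒜₀` then `c_*⁻¹ uvw ∈ 𝒜₀` for a constant `c_*` depending only
on the `C²`-norms of `u, v, w` (and independent of `α₀, H₁, H₂`). -/
theorem memA_two_two_zero_mul (p₀ μ s K : ℝ) (hp₀ : p₀ < 0) (hμ : μ ∈ Set.Ioo (0 : ℝ) 1)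
    (hs : 1 ≤ s) :
    ∃ c : ℝ, 1 ≤ c ∧ ∀ (α₀ : ℕ × ℕ) (H₁ H₂ : ℝ) (u v w : ℝ × ℝ → ℝ),
      3 ≤ α₀.1 + α₀.2 → 1 ≤ H₁ → H₁ ≤ H₂ →
      cknorm p₀ 2 u ≤ K → cknorm p₀ 2 v ≤ K → cknorm p₀ 2 w ≤ K →
      memA p₀ μ s H₁ H₂ α₀ 2 u → memA p₀ μ s H₁ H₂ α₀ 2 v → memA p₀ μ s H₁ H₂ α₀ 0 w →
      ∀ a b : ℕ, a ≤ α₀.1 → b ≤ α₀.2 → 1 ≤ a + b → ∀ z ∈ Strip p₀,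
        |pd p₀ a b (fun y => u y * v y * w y) z| ≤
          c * H₁ ^ a * H₂ ^ b * (Nat.factorial (a + b - 1) : ℝ) ^ s := by
  set M := max K 1 with hMdef
  have hM1 : 1 ≤ M := le_max_right _ _
  have hM0 : 0 ≤ M := by linarith
  refine ⟨24 * M * (24 * M * M), ?_, ?_⟩
  · have : 1 ≤ M * M := one_le_mul_of_one_le_of_one_le hM1 hM1
    have : 1 ≤ M * M * M := one_le_mul_of_one_le_of_one_le this hM1
    nlinarith
  intro α₀ H₁ H₂ u v w h3 hH₁ hH hu hv hw mu mv mw a b ha hb hab z hz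
  have hH₂ : 1 ≤ H₂ := hH₁.trans hH
  have bu := memA_bound p₀ μ s H₁ H₂ K hs hH₁ hH₂ α₀ h3 2 2 (by omega) (by omega) u hu mu
  have bv := memA_bound p₀ μ s H₁ H₂ K hs hH₁ hH₂ α₀ h3 2 2 (by omega) (by omega) v hv mv
  have bw := memA_bound p₀ μ s H₁ H₂ K hs hH₁ hH₂ α₀ h3 0 1 (by omega) (by omega) w hw mw
  have bvw := prod_bound p₀ s H₁ H₂ M M hp₀ hs hH₁ hH₂ hM0 hM0 α₀.1 α₀.2 v w mv.1.1 mw.1.1 bv bw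
  have buvw := prod_bound p₀ s H₁ H₂ M (24 * M * M) hp₀ hs hH₁ hH₂ hM0 (by positivity) α₀.1 α₀.2
    u (fun y => v y * w y) mu.1.1 (mv.1.1.mul mw.1.1) bu bvw a b ha hb z hz
  have e : (fun y => u y * v y * w y) = fun y => u y * (v y * w y) := by
    funext y; ring
  rw [e]
  refine buvw.trans (le_of_eq ?_)
  ring
end
end

section
/- If u, v, w ∈ 𝒜₂, then there is a constant c_* ≥ 1, depending only on the C²-norms ‖u‖₂, ‖v‖₂, ‖w‖₂ (and independent of α₀, H₁, H₂), such that ‖∂^α(uvw)‖₀ ≤ c_* H₁^{α₁−2} H₂^{α₂} [(|α|−2)!]^s for every α = (α₁,α₂) ≤ α₀ with |α| ≥ 2 (i.e. c_*^{−1} H₁ · uvw ∈ 𝒜₁). -/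
open Set

noncomputable section

section Helpers

def DD (S : Set (ℝ × ℝ)) (e : ℝ × ℝ) (f : ℝ × ℝ → ℝ) : ℝ × ℝ → ℝ :=
  fun z => fderivWithin ℝ f S z e

lemma strip_unique {p₀ : ℝ} (hp : p₀ < 0) : UniqueDiffOn ℝ (Strip p₀) := by
  have : Strip p₀ = (Set.univ : Set ℝ) ×ˢ Set.Icc p₀ 0 := by
    ext z; simp [Strip]
  rw [this]
  exact uniqueDiffOn_univ.prod (uniqueDiffOn_Icc hp)

lemma DD_contDiff {S : Set (ℝ × ℝ)} (hS : UniqueDiffOn ℝ S) (e : ℝ × ℝ) {f : ℝ × ℝ → ℝ} {n : ℕ}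
    (hf : ContDiffOn ℝ ((n + 1 : ℕ) : WithTop ℕ∞) f S) : ContDiffOn ℝ (n : WithTop ℕ∞) (DD S e f) S := by
  have h := hf.fderivWithin (m := (n : WithTop ℕ∞)) hS (by norm_cast)
  exact h.clm_apply contDiffOn_const

lemma DD_iter_contDiff {S : Set (ℝ × ℝ)} (hS : UniqueDiffOn ℝ S) (e : ℝ × ℝ) (k : ℕ) :
    ∀ {f : ℝ × ℝ → ℝ} {n : ℕ}, ContDiffOn ℝ ((n + k : ℕ) : WithTop ℕ∞) f S →
      ContDiffOn ℝ (n : WithTop ℕ∞) ((DD S e)^[k] f) S := by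
  induction k with
  | zero => intro f n hf; simpa using hf
  | succ k ih =>
    intro f n hf
    rw [Function.iterate_succ_apply]
    exact ih (DD_contDiff hS e hf)

lemma DD_congr {S : Set (ℝ × ℝ)} (e : ℝ × ℝ) {f g : ℝ × ℝ → ℝ} (h : EqOn f g S) :
    EqOn (DD S e f) (DD S e g) S := by
  intro z hz
  simp only [DD]
  rw [fderivWithin_congr h (h hz)]

lemma DD_iter_congr {S : Set (ℝ × ℝ)} (e : ℝ × ℝ) {f g : ℝ × ℝ → ℝ} (h : EqOn f g S) (k : ℕ) :
    EqOn ((DD S e)^[k] f) ((DD S e)^[k] g) S := by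
  induction k with
  | zero => simpa using h
  | succ k ih =>
    rw [Function.iterate_succ_apply', Function.iterate_succ_apply']
    exact DD_congr e ih

lemma DD_mul {S : Set (ℝ × ℝ)} (hS : UniqueDiffOn ℝ S) (e : ℝ × ℝ) {f g : ℝ × ℝ → ℝ}
    (hf : DifferentiableOn ℝ f S) (hg : DifferentiableOn ℝ g S) :
    EqOn (DD S e (fun y => f y * g y)) (fun y => DD S e f y * g y + f y * DD S e g y) S := by
  intro z hz
  simp only [DD]
  rw [fderivWithin_fun_mul (hS z hz) (hf z hz) (hg z hz)]
  simp; ring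

lemma DD_sum {S : Set (ℝ × ℝ)} (hS : UniqueDiffOn ℝ S) (e : ℝ × ℝ) {ι : Type} (t : Finset ι)
    (c : ι → ℝ) (F : ι → ℝ × ℝ → ℝ) (hF : ∀ i ∈ t, DifferentiableOn ℝ (F i) S) :
    EqOn (DD S e (fun y => ∑ i ∈ t, c i * F i y)) (fun y => ∑ i ∈ t, c i * DD S e (F i) y) S := by
  intro z hz
  simp only [DD]
  rw [fderivWithin_fun_sum (hS z hz) (fun i hi => ((hF i hi) z hz).const_mul (c i))]
  rw [sum_apply]
  refine Finset.sum_congr rfl fun i hi => ?_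
  rw [fderivWithin_const_mul (hS z hz) (hF i hi z hz)]
  simp

lemma DD_iter_sum {S : Set (ℝ × ℝ)} (hS : UniqueDiffOn ℝ S) (e : ℝ × ℝ) {ι : Type} (t : Finset ι)
    (c : ι → ℝ) (k : ℕ) : ∀ (F : ι → ℝ × ℝ → ℝ),
    (∀ i ∈ t, ContDiffOn ℝ (k : WithTop ℕ∞) (F i) S) →
    EqOn ((DD S e)^[k] (fun y => ∑ i ∈ t, c i * F i y))
      (fun y => ∑ i ∈ t, c i * (DD S e)^[k] (F i) y) S := by
  induction k with
  | zero => intro F _ z _; rfl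
  | succ k ih =>
    intro F hF z hz
    have h1 := DD_sum hS e t c F
      (fun i hi => (hF i hi).differentiableOn (by simp))
    simp only [Function.iterate_succ_apply]
    rw [DD_iter_congr e h1 k hz]
    exact ih (fun i => DD S e (F i)) (fun i hi => DD_contDiff hS e (hF i hi)) hz

lemma DD_iter_mul {S : Set (ℝ × ℝ)} (hS : UniqueDiffOn ℝ S) (e : ℝ × ℝ) (k : ℕ)
    {f g : ℝ × ℝ → ℝ}
    (hf : ContDiffOn ℝ (k : WithTop ℕ∞) f S) (hg : ContDiffOn ℝ (k : WithTop ℕ∞) g S) :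
    EqOn ((DD S e)^[k] (fun y => f y * g y))
      (fun y => ∑ i ∈ Finset.HasAntidiagonal.antidiagonal k, (k.choose i.1 : ℝ) *
        ((DD S e)^[i.1] f y * (DD S e)^[i.2] g y)) S := by
  induction k with
  | zero => intro z _; simp
  | succ k ih =>
    intro z hz
    have ih' := ih (hf.of_le (by norm_cast; omega)) (hg.of_le (by norm_cast; omega))
    rw [Function.iterate_succ_apply', DD_congr e ih' hz]
    have hd : ∀ (f : ℝ × ℝ → ℝ), ContDiffOn ℝ ((k + 1 : ℕ) : WithTop ℕ∞) f S → ∀ j ≤ k,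
        DifferentiableOn ℝ ((DD S e)^[j] f) S := by
      intro f hf j hj
      refine (DD_iter_contDiff hS e j (n := 1) (hf.of_le ?_)).differentiableOn (by simp)
      norm_cast; omega
    have hm : ∀ i ∈ Finset.HasAntidiagonal.antidiagonal k, i.1 ≤ k ∧ i.2 ≤ k := by
      intro i hi; rw [Finset.HasAntidiagonal.mem_antidiagonal] at hi; omega
    rw [DD_sum hS e _ (fun i : ℕ × ℕ => (k.choose i.1 : ℝ))
      (fun i y => (DD S e)^[i.1] f y * (DD S e)^[i.2] g y)
      (fun i hi => (hd f hf _ (hm i hi).1).mul (hd g hg _ (hm i hi).2)) hz]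
    beta_reduce
    rw [Finset.sum_antidiagonal_choose_succ_mul
      (fun i j => (DD S e)^[i] f z * (DD S e)^[j] g z) k, ← Finset.sum_add_distrib]
    refine Finset.sum_congr rfl fun i hi => ?_
    rw [DD_mul hS e (hd f hf _ (hm i hi).1) (hd g hg _ (hm i hi).2) hz,
      Function.iterate_succ_apply', Function.iterate_succ_apply']
    have : k.choose i.2 = k.choose i.1 := by
      rw [Finset.HasAntidiagonal.mem_antidiagonal] at hi
      exact (Nat.choose_symm_of_eq_add (by omega)).symm
    try simp only [this]
    ring

lemma ifd_succ {S : Set (ℝ × ℝ)} (hS : UniqueDiffOn ℝ S) {n : ℕ} {f : ℝ × ℝ → ℝ}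
    (hf : ContDiffOn ℝ ((n + 1 : ℕ) : WithTop ℕ∞) f S) {z : ℝ × ℝ} (hz : z ∈ S)
    (m : Fin (n + 1) → ℝ × ℝ) :
    iteratedFDerivWithin ℝ (n + 1) f S z m =
      iteratedFDerivWithin ℝ n (DD S (m (Fin.last n)) f) S z (Fin.init m) := by
  rw [iteratedFDerivWithin_succ_apply_right hS hz]
  have h := hf.fderivWithin (m := (n : WithTop ℕ∞)) hS (by norm_cast)
  have h2 := (ContinuousLinearMap.apply ℝ ℝ (m (Fin.last n))).iteratedFDerivWithin_comp_left
    (h z hz) hS hz (i := n) le_rfl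
  have h3 : DD S (m (Fin.last n)) f =
    (ContinuousLinearMap.apply ℝ ℝ (m (Fin.last n))) ∘ (fderivWithin ℝ f S) := rfl
  rw [h3, h2]
  rfl

lemma mpw_eq {S : Set (ℝ × ℝ)} (hS : UniqueDiffOn ℝ S) (a b : ℕ) : ∀ {f : ℝ × ℝ → ℝ},
    ContDiffOn ℝ ((a + b : ℕ) : WithTop ℕ∞) f S →
    EqOn (mpw S a b f) ((DD S (1, 0))^[a] ((DD S (0, 1))^[b] f)) S := by
  induction b with
  | zero =>
    induction a with
    | zero => intro f _ z _; simp [mpw]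
    | succ a ih =>
      intro f hf z hz
      have e := ih (DD_contDiff hS (1, 0) (n := a + 0) hf) hz
      simp only [Function.iterate_zero, id] at e ⊢
      rw [Function.iterate_succ_apply, ← e]
      simp only [mpw]
      have := ifd_succ hS (n := a) hf hz
        (fun i => if (i : ℕ) < a + 1 then ((1 : ℝ), (0 : ℝ)) else ((0 : ℝ), (1 : ℝ)))
      refine this.trans ?_
      simp only [Fin.val_last, lt_add_iff_pos_right, zero_lt_one, if_true]
      show iteratedFDerivWithin ℝ a _ S z _ = iteratedFDerivWithin ℝ a _ S z _
      congr 1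
      funext i
      have := i.2
      simp [Fin.init]
  | succ b ih =>
    intro f hf z hz
    have e := ih (DD_contDiff hS (0, 1) (n := a + b) hf) hz
    rw [Function.iterate_succ_apply, ← e]
    simp only [mpw]
    have := ifd_succ hS (n := a + b) hf hz
        (fun i => if (i : ℕ) < a then ((1 : ℝ), (0 : ℝ)) else ((0 : ℝ), (1 : ℝ)))
    refine this.trans ?_
    simp
    rfl

lemma pd_mul {S : Set (ℝ × ℝ)} (hS : UniqueDiffOn ℝ S) (a b : ℕ) {f g : ℝ × ℝ → ℝ}
    (hf : ContDiffOn ℝ ((a + b : ℕ) : WithTop ℕ∞) f S)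
    (hg : ContDiffOn ℝ ((a + b : ℕ) : WithTop ℕ∞) g S) {z : ℝ × ℝ} (hz : z ∈ S) :
    mpw S a b (fun y => f y * g y) z =
      ∑ i ∈ Finset.HasAntidiagonal.antidiagonal a, (a.choose i.1 : ℝ) *
        ∑ j ∈ Finset.HasAntidiagonal.antidiagonal b, (b.choose j.1 : ℝ) *
          (mpw S i.1 j.1 f z * mpw S i.2 j.2 g z) := by
  have hb : ∀ {f : ℝ × ℝ → ℝ}, ContDiffOn ℝ ((a + b : ℕ) : WithTop ℕ∞) f S → ∀ j ≤ b,
      ContDiffOn ℝ (a : WithTop ℕ∞) ((DD S (0, 1))^[j] f) S := by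
    intro f hf j hj
    exact DD_iter_contDiff hS _ j (hf.of_le (by norm_cast; omega))
  have hm : ∀ k : ℕ, ∀ i ∈ Finset.HasAntidiagonal.antidiagonal k, i.1 ≤ k ∧ i.2 ≤ k := by
    intro k i hi; rw [Finset.HasAntidiagonal.mem_antidiagonal] at hi; omega
  rw [mpw_eq hS a b (hf.mul hg) hz]
  rw [DD_iter_congr (1, 0) (DD_iter_mul hS (0, 1) b (hf.of_le (by norm_cast; omega))
    (hg.of_le (by norm_cast; omega))) a hz]
  rw [DD_iter_sum hS (1, 0) _ (fun j : ℕ × ℕ => (b.choose j.1 : ℝ)) a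
    (fun j y => (DD S (0, 1))^[j.1] f y * (DD S (0, 1))^[j.2] g y)
    (fun j hj => (hb hf _ (hm b j hj).1).mul (hb hg _ (hm b j hj).2)) hz]
  have : ∀ j ∈ Finset.HasAntidiagonal.antidiagonal b, (b.choose j.1 : ℝ) *
      (DD S (1, 0))^[a] (fun y => (DD S (0, 1))^[j.1] f y * (DD S (0, 1))^[j.2] g y) z =
      ∑ i ∈ Finset.HasAntidiagonal.antidiagonal a, (b.choose j.1 : ℝ) * ((a.choose i.1 : ℝ) *
        (mpw S i.1 j.1 f z * mpw S i.2 j.2 g z)) := by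
    intro j hj
    rw [DD_iter_mul hS (1, 0) a (hb hf _ (hm b j hj).1) (hb hg _ (hm b j hj).2) hz, Finset.mul_sum]
    refine Finset.sum_congr rfl fun i hi => ?_
    have h1 := hm b j hj
    have h2 := hm a i hi
    rw [mpw_eq hS _ _ (hf.of_le (by norm_cast; omega)) hz,
      mpw_eq hS _ _ (hg.of_le (by norm_cast; omega)) hz]
  beta_reduce
  rw [Finset.sum_congr rfl this, Finset.sum_comm]
  refine Finset.sum_congr rfl fun i _ => ?_
  rw [Finset.mul_sum]
  refine Finset.sum_congr rfl fun j _ => ?_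
  ring

/-- Vandermonde. -/
lemma vand (b : ℕ) (a : ℕ) : ∀ φ : ℕ → ℕ → ℝ,
    ∑ i ∈ Finset.HasAntidiagonal.antidiagonal a, (a.choose i.1 : ℝ) *
        ∑ j ∈ Finset.HasAntidiagonal.antidiagonal b, (b.choose j.1 : ℝ) * φ (i.1 + j.1) (i.2 + j.2) =
    ∑ l ∈ Finset.HasAntidiagonal.antidiagonal (a + b), ((a + b).choose l.1 : ℝ) * φ l.1 l.2 := by
  have key : ∀ (n : ℕ) (φ : ℕ → ℕ → ℝ),
      ∑ l ∈ Finset.HasAntidiagonal.antidiagonal (n + 1), ((n + 1).choose l.1 : ℝ) * φ l.1 l.2 =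
      ∑ l ∈ Finset.HasAntidiagonal.antidiagonal n, (n.choose l.1 : ℝ) * (φ l.1 (l.2 + 1) + φ (l.1 + 1) l.2) := by
    intro n φ
    rw [Finset.sum_antidiagonal_choose_succ_mul φ n, ← Finset.sum_add_distrib]
    refine Finset.sum_congr rfl fun i hi => ?_
    have : n.choose i.2 = n.choose i.1 := by
      rw [Finset.HasAntidiagonal.mem_antidiagonal] at hi
      exact (Nat.choose_symm_of_eq_add (by omega)).symm
    rw [this]; ring
  induction a with
  | zero => intro φ; simp
  | succ a ih =>
    intro φ
    rw [key a (fun x y => ∑ j ∈ Finset.HasAntidiagonal.antidiagonal b, (b.choose j.1 : ℝ) * φ (x + j.1) (y + j.2))]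
    have := ih (fun x y => φ x (y + 1) + φ (x + 1) y)
    rw [show a + 1 + b = a + b + 1 by ring, key, ← this]
    refine Finset.sum_congr rfl fun i _ => ?_
    rw [← Finset.sum_add_distrib]
    congr 1
    refine Finset.sum_congr rfl fun j _ => ?_
    rw [← mul_add, show i.2 + 1 + j.2 = i.2 + j.2 + 1 by ring,
      show i.1 + 1 + j.1 = i.1 + j.1 + 1 by ring]

def FF (n : ℕ) : ℝ := ((n - 2).factorial : ℝ)

lemma FF_pos (n : ℕ) : 0 < FF n := by unfold FF; positivity

lemma FF_one (n : ℕ) : 1 ≤ FF n := by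
  unfold FF; exact_mod_cast Nat.factorial_pos _

lemma FF_le (n : ℕ) : FF n * (n + 1) ^ 2 ≤ 5 * n.factorial := by
  unfold FF
  rcases n with _ | _ | n
  · norm_num
  · norm_num
  · simp only [Nat.add_sub_cancel, Nat.factorial_succ]
    push_cast
    have h : (0 : ℝ) < n.factorial := by positivity
    have hn : (0 : ℝ) ≤ n := by positivity
    have : ((n : ℝ) + 1 + 1 + 1) ^ 2 ≤ 5 * ((n + 1 + 1) * (n + 1)) := by nlinarith
    nlinarith

lemma FF_ge (n : ℕ) : (n.factorial : ℝ) ≤ FF n * (n + 2) ^ 2 := by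
  unfold FF
  rcases n with _ | _ | n
  · norm_num
  · norm_num
  · simp only [Nat.add_sub_cancel, Nat.factorial_succ]
    push_cast
    have h : (0 : ℝ) < n.factorial := by positivity
    have hn : (0 : ℝ) ≤ n := by positivity
    have : ((n : ℝ) + 1 + 1) * (n + 1) ≤ (n + 1 + 1 + 2) ^ 2 := by nlinarith
    nlinarith

lemma sum_sq (n : ℕ) : ∑ l ∈ Finset.range (n + 1), 1 / ((l : ℝ) + 1) ^ 2 ≤ 2 - 1 / ((n : ℝ) + 1) := by
  induction n with
  | zero => norm_num
  | succ n ih =>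
    rw [Finset.sum_range_succ]
    have hn : (0 : ℝ) ≤ n := by positivity
    have : 1 / (((n + 1 : ℕ) : ℝ) + 1) ^ 2 ≤ 1 / ((n : ℝ) + 1) - 1 / (((n + 1 : ℕ) : ℝ) + 1) := by
      push_cast
      rw [div_sub_div _ _ (by positivity) (by positivity), div_le_div_iff₀ (by positivity) (by positivity)]
      nlinarith
    linarith

lemma conv (n : ℕ) :
    ∑ l ∈ Finset.HasAntidiagonal.antidiagonal n, (n.choose l.1 : ℝ) * (FF l.1 * FF l.2) ≤ 200 * FF n := by
  have h1 : ∀ l ∈ Finset.HasAntidiagonal.antidiagonal n, (n.choose l.1 : ℝ) * (FF l.1 * FF l.2) ≤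
      50 * FF n * (1 / ((l.1 : ℝ) + 1) ^ 2 + 1 / ((l.2 : ℝ) + 1) ^ 2) := by
    rintro ⟨x, y⟩ hl
    rw [Finset.HasAntidiagonal.mem_antidiagonal] at hl
    simp only at hl ⊢
    subst hl
    have hx : (0 : ℝ) ≤ x := by positivity
    have hy : (0 : ℝ) ≤ y := by positivity
    have e1 : FF x ≤ 5 * x.factorial / ((x : ℝ) + 1) ^ 2 := by
      rw [le_div_iff₀ (by positivity)]; exact FF_le x
    have e2 : FF y ≤ 5 * y.factorial / ((y : ℝ) + 1) ^ 2 := by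
      rw [le_div_iff₀ (by positivity)]; exact FF_le y
    have e3 := FF_ge (x + y)
    have e4 : ((x + y).choose x : ℝ) * x.factorial * y.factorial = (x + y).factorial := by
      rw [Nat.choose_symm_add]
      exact_mod_cast Nat.add_choose_mul_factorial_mul_factorial x y
    have hF := FF_pos (x + y)
    calc ((x + y).choose x : ℝ) * (FF x * FF y)
        ≤ (x + y).choose x * ((5 * x.factorial / ((x : ℝ) + 1) ^ 2) *
          (5 * y.factorial / ((y : ℝ) + 1) ^ 2)) := by
          have := (FF_pos x).le
          have := (FF_pos y).le
          gcongr
      _ = 25 * (x + y).factorial / (((x : ℝ) + 1) ^ 2 * ((y : ℝ) + 1) ^ 2) := by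
          rw [← e4]; field_simp
          norm_num
      _ ≤ 25 * (FF (x + y) * (((x + y : ℕ) : ℝ) + 2) ^ 2) /
            (((x : ℝ) + 1) ^ 2 * ((y : ℝ) + 1) ^ 2) := by gcongr
      _ ≤ 50 * FF (x + y) * (1 / ((x : ℝ) + 1) ^ 2 + 1 / ((y : ℝ) + 1) ^ 2) := by
          rw [div_add_div _ _ (by positivity) (by positivity), mul_div_assoc',
            div_le_div_iff_of_pos_right (by positivity)]
          push_cast
          have : ((x : ℝ) + y + 2) ^ 2 ≤ 2 * (1 * ((y : ℝ) + 1) ^ 2 + ((x : ℝ) + 1) ^ 2 * 1) := by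
            nlinarith [sq_nonneg ((x : ℝ) - y)]
          nlinarith
  refine (Finset.sum_le_sum h1).trans ?_
  rw [← Finset.mul_sum, Finset.sum_add_distrib]
  have s1 : ∑ l ∈ Finset.HasAntidiagonal.antidiagonal n, 1 / ((l.1 : ℝ) + 1) ^ 2 ≤ 2 := by
    rw [Finset.Nat.sum_antidiagonal_eq_sum_range_succ (fun x _ => 1 / ((x : ℝ) + 1) ^ 2)]
    have := sum_sq n
    have : (0 : ℝ) ≤ 1 / (n + 1) := by positivity
    linarith
  have s2 : ∑ l ∈ Finset.HasAntidiagonal.antidiagonal n, 1 / ((l.2 : ℝ) + 1) ^ 2 ≤ 2 := by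
    rw [← Finset.Nat.sum_antidiagonal_swap]; exact s1
  have := FF_pos n
  nlinarith

lemma sum_rpow {ι : Type} (t : Finset ι) (y : ι → ℝ) (hy : ∀ i ∈ t, 0 ≤ y i) {s : ℝ} (hs : 1 ≤ s) :
    ∑ i ∈ t, y i ^ s ≤ (∑ i ∈ t, y i) ^ s := by
  have hsplit : ∀ x : ℝ, 0 ≤ x → x ^ s = x * x ^ (s - 1) := by
    intro x hx
    rcases hx.eq_or_lt with h | h
    · rw [← h, Real.zero_rpow (by linarith)]; simp
    · rw [Real.rpow_sub_one h.ne']; field_simp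
  rw [hsplit _ (Finset.sum_nonneg hy), Finset.sum_mul]
  refine Finset.sum_le_sum fun i hi => ?_
  rw [hsplit _ (hy i hi)]
  exact mul_le_mul_of_nonneg_left (Real.rpow_le_rpow (hy i hi)
    (Finset.single_le_sum hy hi) (by linarith)) (hy i hi)

lemma conv_rpow (n : ℕ) {s : ℝ} (hs : 1 ≤ s) :
    ∑ l ∈ Finset.HasAntidiagonal.antidiagonal n, (n.choose l.1 : ℝ) * (FF l.1 ^ s * FF l.2 ^ s) ≤
      200 ^ s * FF n ^ s := by
  have hnn : ∀ l ∈ Finset.HasAntidiagonal.antidiagonal n, 0 ≤ (n.choose l.1 : ℝ) * (FF l.1 * FF l.2) := by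
    intro l _
    have := FF_pos l.1
    have := FF_pos l.2
    positivity
  rw [← Real.mul_rpow (by norm_num) (FF_pos n).le]
  refine le_trans ?_ ((sum_rpow _ _ hnn hs).trans
    (Real.rpow_le_rpow (Finset.sum_nonneg hnn) (conv n) (by linarith)))
  refine Finset.sum_le_sum fun l hl => ?_
  have h1 := FF_pos l.1
  have h2 := FF_pos l.2
  rw [Real.mul_rpow (by positivity) (by positivity), Real.mul_rpow h1.le h2.le]
  have hc : (1 : ℝ) ≤ n.choose l.1 := by
    rw [Finset.HasAntidiagonal.mem_antidiagonal] at hl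
    exact_mod_cast Nat.choose_pos (by omega)
  exact mul_le_mul_of_nonneg_right (Real.self_le_rpow_of_one_le hc hs) (by positivity)

def PP (H₁ H₂ : ℝ) (a b : ℕ) : ℝ := if a + b ≤ 1 then 1 else H₁ ^ ((a : ℤ) - 2) * H₂ ^ b

lemma PP_pos {H₁ H₂ : ℝ} (h1 : 1 ≤ H₁) (h2 : H₁ ≤ H₂) (a b : ℕ) : 0 < PP H₁ H₂ a b := by
  have : 0 < H₁ := by linarith
  have : 0 < H₂ := by linarith
  unfold PP; split_ifs <;> positivity

lemma QQ_one {H₁ H₂ : ℝ} (h1 : 1 ≤ H₁) (h2 : H₁ ≤ H₂) (a b : ℕ) (h : 2 ≤ a + b) :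
    1 ≤ H₁ ^ ((a : ℤ) - 2) * H₂ ^ b := by
  have h0 : 0 < H₁ := by linarith
  calc (1 : ℝ) ≤ H₁ ^ (a + b - 2) := one_le_pow₀ h1
    _ = H₁ ^ ((a : ℤ) - 2) * H₁ ^ b := by
      rw [← zpow_natCast, ← zpow_natCast, ← zpow_add₀ h0.ne']
      congr 1; omega
    _ ≤ _ := by gcongr

lemma PP_mul {H₁ H₂ : ℝ} (h1 : 1 ≤ H₁) (h2 : H₁ ≤ H₂) (a b a' b' : ℕ) :
    PP H₁ H₂ a b * PP H₁ H₂ a' b' ≤ PP H₁ H₂ (a + a') (b + b') := by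
  have h0 : 0 < H₁ := by linarith
  have h0' : 0 < H₂ := by linarith
  have h3 : 1 ≤ H₂ := by linarith
  have mono : ∀ a b a' b' : ℕ, a ≤ a' → b ≤ b' →
      H₁ ^ ((a : ℤ) - 2) * H₂ ^ b ≤ H₁ ^ ((a' : ℤ) - 2) * H₂ ^ b' := by
    intro a b a' b' ha hb
    have := zpow_le_zpow_right₀ h1 (show (a : ℤ) - 2 ≤ (a' : ℤ) - 2 by omega)
    have := pow_le_pow_right₀ h3 hb
    gcongr
  unfold PP
  by_cases c1 : a + b ≤ 1 <;> by_cases c2 : a' + b' ≤ 1 <;>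
    by_cases c3 : (a + a') + (b + b') ≤ 1
  · simp [c1, c2, c3]
  · simp only [c1, c2, c3, if_true, if_false, mul_one]
    exact QQ_one h1 h2 _ _ (by omega)
  · omega
  · simp only [c1, c2, c3, if_true, if_false, one_mul]
    exact mono _ _ _ _ (by omega) (by omega)
  · omega
  · simp only [c1, c2, c3, if_true, if_false, mul_one]
    exact mono _ _ _ _ (by omega) (by omega)
  · omega
  · simp only [c1, c2, c3, if_false]
    have : H₁ ^ ((a : ℤ) - 2) * H₁ ^ ((a' : ℤ) - 2) ≤ H₁ ^ (((a + a' : ℕ) : ℤ) - 2) := by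
      rw [← zpow_add₀ h0.ne']
      exact zpow_le_zpow_right₀ h1 (by push_cast; omega)
    calc _ = (H₁ ^ ((a : ℤ) - 2) * H₁ ^ ((a' : ℤ) - 2)) * H₂ ^ (b + b') := by
          rw [pow_add]; ring
      _ ≤ _ := by gcongr

lemma bd_mul {S : Set (ℝ × ℝ)} (hS : UniqueDiffOn ℝ S) {s H₁ H₂ : ℝ} (hs : 1 ≤ s)
    (h1 : 1 ≤ H₁) (h2 : H₁ ≤ H₂) (A B : ℕ) {f g : ℝ × ℝ → ℝ} {M N : ℝ} (hM : 0 ≤ M) (hN : 0 ≤ N)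
    (hf : ContDiffOn ℝ ((A + B : ℕ) : WithTop ℕ∞) f S)
    (hg : ContDiffOn ℝ ((A + B : ℕ) : WithTop ℕ∞) g S)
    (bf : ∀ a b, a ≤ A → b ≤ B → ∀ z ∈ S, |mpw S a b f z| ≤ M * (PP H₁ H₂ a b * FF (a + b) ^ s))
    (bg : ∀ a b, a ≤ A → b ≤ B → ∀ z ∈ S, |mpw S a b g z| ≤ N * (PP H₁ H₂ a b * FF (a + b) ^ s)) :
    ∀ a b, a ≤ A → b ≤ B → ∀ z ∈ S, |mpw S a b (fun y => f y * g y) z| ≤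
      (200 ^ s * M * N) * (PP H₁ H₂ a b * FF (a + b) ^ s) := by
  intro a b ha hb z hz
  rw [pd_mul hS a b (hf.of_le (by norm_cast; omega)) (hg.of_le (by norm_cast; omega)) hz]
  have step : |∑ i ∈ Finset.HasAntidiagonal.antidiagonal a, (a.choose i.1 : ℝ) *
        ∑ j ∈ Finset.HasAntidiagonal.antidiagonal b, (b.choose j.1 : ℝ) *
          (mpw S i.1 j.1 f z * mpw S i.2 j.2 g z)| ≤
      ∑ i ∈ Finset.HasAntidiagonal.antidiagonal a, (a.choose i.1 : ℝ) *
        ∑ j ∈ Finset.HasAntidiagonal.antidiagonal b, (b.choose j.1 : ℝ) *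
          ((M * N * PP H₁ H₂ a b) * (FF (i.1 + j.1) ^ s * FF (i.2 + j.2) ^ s)) := by
    refine (Finset.abs_sum_le_sum_abs _ _).trans (Finset.sum_le_sum fun i hi => ?_)
    rw [abs_mul, Nat.abs_cast]
    refine mul_le_mul_of_nonneg_left ?_ (Nat.cast_nonneg _)
    refine (Finset.abs_sum_le_sum_abs _ _).trans (Finset.sum_le_sum fun j hj => ?_)
    rw [abs_mul, Nat.abs_cast]
    refine mul_le_mul_of_nonneg_left ?_ (Nat.cast_nonneg _)
    rw [Finset.HasAntidiagonal.mem_antidiagonal] at hi hj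
    have e1 := bf i.1 j.1 (by omega) (by omega) z hz
    have e2 := bg i.2 j.2 (by omega) (by omega) z hz
    have e3 := PP_mul h1 h2 i.1 j.1 i.2 j.2
    rw [hi, hj] at e3
    have p1 := (PP_pos h1 h2 i.1 j.1).le
    have q1 := Real.rpow_nonneg (FF_pos (i.1 + j.1)).le s
    have q2 := Real.rpow_nonneg (FF_pos (i.2 + j.2)).le s
    rw [abs_mul]
    calc _ ≤ (M * (PP H₁ H₂ i.1 j.1 * FF (i.1 + j.1) ^ s)) *
          (N * (PP H₁ H₂ i.2 j.2 * FF (i.2 + j.2) ^ s)) :=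
          mul_le_mul e1 e2 (abs_nonneg _) (by positivity)
      _ = (M * N * (PP H₁ H₂ i.1 j.1 * PP H₁ H₂ i.2 j.2)) *
          (FF (i.1 + j.1) ^ s * FF (i.2 + j.2) ^ s) := by ring
      _ ≤ _ := by gcongr
  refine step.trans ?_
  rw [vand b a (fun x y => (M * N * PP H₁ H₂ a b) * (FF x ^ s * FF y ^ s))]
  have := conv_rpow (a + b) hs
  have pp := (PP_pos h1 h2 a b).le
  calc _ = (M * N * PP H₁ H₂ a b) * ∑ l ∈ Finset.HasAntidiagonal.antidiagonal (a + b),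
        ((a + b).choose l.1 : ℝ) * (FF l.1 ^ s * FF l.2 ^ s) := by
        rw [Finset.mul_sum]; refine Finset.sum_congr rfl fun l _ => ?_; ring
    _ ≤ (M * N * PP H₁ H₂ a b) * (200 ^ s * FF (a + b) ^ s) := by gcongr
    _ = _ := by ring

lemma supS_nonneg (p₀ : ℝ) (f : ℝ × ℝ → ℝ) : 0 ≤ supS p₀ f := by
  apply Real.sSup_nonneg
  rintro _ ⟨z, _, rfl⟩
  exact abs_nonneg _

lemma memA_bd {p₀ μ s H₁ H₂ K : ℝ} (hs : 1 ≤ s) (h1 : 1 ≤ H₁) (h2 : H₁ ≤ H₂) {α₀ : ℕ × ℕ}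
    (h3 : 3 ≤ α₀.1 + α₀.2) {f : ℝ × ℝ → ℝ} (hK : cknorm p₀ 2 f ≤ K)
    (hf : memA p₀ μ s H₁ H₂ α₀ 2 f) :
    ∀ a b, a ≤ α₀.1 → b ≤ α₀.2 → ∀ z ∈ Strip p₀,
      |mpw (Strip p₀) a b f z| ≤ max K 1 * (PP H₁ H₂ a b * FF (a + b) ^ s) := by
  intro a b ha hb z hz
  have hM : (1 : ℝ) ≤ max K 1 := le_max_right _ _
  have hP := PP_pos h1 h2 a b
  by_cases h : a + b ≤ 2
  · have e1 : |pd p₀ a b f z| ≤ supS p₀ (pd p₀ a b f) :=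
      le_csSup (hf.1.2.1 a b (by omega)) ⟨z, hz, rfl⟩
    have e2 : supS p₀ (pd p₀ a b f) ≤ cknorm p₀ 2 f := by
      unfold cknorm
      refine le_trans ?_ (Finset.single_le_sum
        (f := fun a => ∑ b ∈ Finset.range (2 + 1 - a), supS p₀ (pd p₀ a b f))
        (fun i _ => Finset.sum_nonneg fun j _ => supS_nonneg _ _)
        (Finset.mem_range.2 (show a < 2 + 1 by omega)))
      exact Finset.single_le_sum (f := fun b => supS p₀ (pd p₀ a b f))
        (fun j _ => supS_nonneg _ _) (Finset.mem_range.2 (show b < 2 + 1 - a by omega))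
    have e3 : 1 ≤ PP H₁ H₂ a b := by
      unfold PP
      split_ifs with hc
      · exact le_rfl
      · exact QQ_one h1 h2 a b (by omega)
    have e4 : 1 ≤ FF (a + b) ^ s := Real.one_le_rpow (FF_one _) (by linarith)
    have e5 : 1 ≤ PP H₁ H₂ a b * FF (a + b) ^ s := by nlinarith
    calc |mpw (Strip p₀) a b f z| ≤ max K 1 := (e1.trans (e2.trans hK)).trans (le_max_left _ _)
      _ ≤ _ := le_mul_of_one_le_right (by linarith) e5
  · have e1 := hf.2 a b ha hb (by omega) z hz
    refine le_trans e1 ?_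
    have e2 : PP H₁ H₂ a b = H₁ ^ ((a : ℤ) - ((2 : ℕ) : ℤ)) * H₂ ^ b := by
      unfold PP; rw [if_neg (by omega)]; rfl
    rw [← e2]
    have e3 : ((a + b - (2 + 1)).factorial : ℝ) ^ s ≤ FF (a + b) ^ s := by
      refine Real.rpow_le_rpow (by positivity) ?_ (by linarith)
      unfold FF
      exact_mod_cast Nat.factorial_le (by omega)
    have e4 := Real.rpow_nonneg (FF_pos (a + b)).le s
    calc _ ≤ PP H₁ H₂ a b * FF (a + b) ^ s := by gcongr
      _ ≤ _ := le_mul_of_one_le_left (by positivity) hM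

end Helpers

/-- If `u, v, w ∈ 𝒜₂` then `c_*⁻¹ H₁ · uvw ∈ 𝒜₁` for a constant `c_*` depending only
on the `C²`-norms of `u, v, w` (and independent of `α₀, H₁, H₂`). -/
theorem memA_two_two_two_mul (p₀ μ s K : ℝ) (hp₀ : p₀ < 0) (hμ : μ ∈ Set.Ioo (0 : ℝ) 1)
    (hs : 1 ≤ s) :
    ∃ c : ℝ, 1 ≤ c ∧ ∀ (α₀ : ℕ × ℕ) (H₁ H₂ : ℝ) (u v w : ℝ × ℝ → ℝ),
      3 ≤ α₀.1 + α₀.2 → 1 ≤ H₁ → H₁ ≤ H₂ →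
      cknorm p₀ 2 u ≤ K → cknorm p₀ 2 v ≤ K → cknorm p₀ 2 w ≤ K →
      memA p₀ μ s H₁ H₂ α₀ 2 u → memA p₀ μ s H₁ H₂ α₀ 2 v → memA p₀ μ s H₁ H₂ α₀ 2 w →
      ∀ a b : ℕ, a ≤ α₀.1 → b ≤ α₀.2 → 2 ≤ a + b → ∀ z ∈ Strip p₀,
        |pd p₀ a b (fun y => u y * v y * w y) z| ≤
          c * H₁ ^ ((a : ℤ) - 2) * H₂ ^ b * (Nat.factorial (a + b - 2) : ℝ) ^ s := by
  have hM : (1 : ℝ) ≤ max K 1 := le_max_right _ _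
  have h200 : (1 : ℝ) ≤ 200 ^ s := Real.one_le_rpow (by norm_num) (by linarith)
  have hM0 : (0 : ℝ) ≤ max K 1 := by linarith
  refine ⟨200 ^ s * (200 ^ s * max K 1 * max K 1) * max K 1, ?_, ?_⟩
  · have t1 : (1 : ℝ) ≤ 200 ^ s * max K 1 := one_le_mul_of_one_le_of_one_le h200 hM
    have t2 := one_le_mul_of_one_le_of_one_le t1 hM
    exact one_le_mul_of_one_le_of_one_le (one_le_mul_of_one_le_of_one_le h200 t2) hM
  · intro α₀ H₁ H₂ u v w h3 h1 h2 ku kv kw mu mv mw a b ha hb hab z hz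
    have hS := strip_unique hp₀
    have bu := memA_bd hs h1 h2 h3 ku mu
    have bv := memA_bd hs h1 h2 h3 kv mv
    have bw := memA_bd hs h1 h2 h3 kw mw
    have cu := mu.1.1
    have cv := mv.1.1
    have cw := mw.1.1
    have buv := bd_mul hS hs h1 h2 α₀.1 α₀.2 hM0 hM0 cu cv bu bv
    have key := bd_mul hS hs h1 h2 α₀.1 α₀.2 (by positivity) hM0 (cu.mul cv) cw buv bw a b ha hb z hz
    have e : PP H₁ H₂ a b = H₁ ^ ((a : ℤ) - 2) * H₂ ^ b := by
      unfold PP; rw [if_neg (by omega)]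
    rw [e] at key
    refine key.trans (le_of_eq ?_)
    unfold FF
    ring
end
end
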